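/- arXiv:1405.3375 — 2 statements merged into one kernel-verified Lean document; each statement's English description precedes it below -/
import Mathlib

section
/- An R-module M is Gorenstein weak injective if and only if there exists a short exact sequence 0 → L → I → M → 0 with I injective and L Gorenstein weak injective. -/
open CategoryTheory

universe u

noncomputable section

variable (R : Type u) [Ring R]

/-- Vanishing of `Ext^n_R(N, M)` for left `R`-modules, expressed via the `Ext` bifunctor
on the `ℤ`-linear abelian category `ModuleCat R`. -/
def ExtVanish (n : ℕ) (N M : ModuleCat.{u} R) : Prop :=
  Subsingleton (((_root_.Ext ℤ (ModuleCat.{u} R) n).obj (Opposite.op N)).obj M)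

/-- An `R`-module is super finitely presented if it admits a resolution by
finitely generated projective modules. -/
def SuperFinitelyPresented (N : ModuleCat.{u} R) : Prop :=
  ∃ (F : ℕ → ModuleCat.{u} R) (d : ∀ n, F (n + 1) →ₗ[R] F n) (ε : F 0 →ₗ[R] N),
    (∀ n, Module.Finite R (F n)) ∧ (∀ n, Module.Projective R (F n)) ∧
    Function.Surjective ε ∧ Function.Exact (d 0) ε ∧
    (∀ n, Function.Exact (d (n + 1)) (d n))

/-- An `R`-module `W` is weak injective if `Ext^1_R(N, W) = 0` for every super finitely
presented module `N`. -/
def WeakInjective (W : ModuleCat.{u} R) : Prop :=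
  ∀ N : ModuleCat.{u} R, SuperFinitelyPresented R N → ExtVanish R 1 N W

/-- `wid_R M ≤ n` : `Ext^{n+1}_R(N, M) = 0` for every super finitely presented `N`. -/
def WidLE (M : ModuleCat.{u} R) (n : ℕ) : Prop :=
  ∀ N : ModuleCat.{u} R, SuperFinitelyPresented R N → ExtVanish R (n + 1) N M

/-- The weak injective dimension, as an element of `ℕ∞`. -/
def Wid (M : ModuleCat.{u} R) : ℕ∞ :=
  sInf {c : ℕ∞ | ∃ n : ℕ, c = n ∧ WidLE R M n}

/-- A doubly infinite exact complex of injective modules which stays exact after applying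
`Hom_R(W, -)` for every module `W` in the test class `𝒯`. -/
def IsTotallyAcyclicInjComplex (𝒯 : ModuleCat.{u} R → Prop)
    (I : ℤ → ModuleCat.{u} R) (d : ∀ n : ℤ, I n →ₗ[R] I (n + 1)) : Prop :=
  (∀ n, Module.Injective R (I n)) ∧
  (∀ n, Function.Exact (d n) (d (n + 1))) ∧
  (∀ W : ModuleCat.{u} R, 𝒯 W → ∀ n,
    Function.Exact (fun g : W →ₗ[R] I n => (d n).comp g)
      (fun g : W →ₗ[R] I (n + 1) => (d (n + 1)).comp g))

/-- `M` is Gorenstein injective relative to the test class `𝒯` : `M` is the cokernel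
`Coker (I_1 → I_0)` of a `Hom(𝒯, -)`-exact exact complex of injective modules. -/
def GorensteinRelInjective (𝒯 : ModuleCat.{u} R → Prop) (M : ModuleCat.{u} R) : Prop :=
  ∃ (I : ℤ → ModuleCat.{u} R) (d : ∀ n : ℤ, I n →ₗ[R] I (n + 1)) (π : I 0 →ₗ[R] M),
    IsTotallyAcyclicInjComplex R 𝒯 I d ∧
    Function.Surjective π ∧ Function.Exact (d (-1)) π

/-- Gorenstein weak injective modules: the test class is that of weak injective modules. -/
def GorensteinWeakInjective (M : ModuleCat.{u} R) : Prop :=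
  GorensteinRelInjective R (WeakInjective R) M

/-- Gorenstein injective modules: the test class is that of injective modules. -/
def GorensteinInjective (M : ModuleCat.{u} R) : Prop :=
  GorensteinRelInjective R (fun E => Module.Injective R E) M

/-- The data of an exact sequence `0 → M → G^0 → ⋯ → G^n → 0` (the modules `G^i` for
`i > n` being trivial). -/
def IsFiniteCoresolution (M : ModuleCat.{u} R) (n : ℕ) (G : ℕ → ModuleCat.{u} R)
    (d : ∀ i, G i →ₗ[R] G (i + 1)) (ε : M →ₗ[R] G 0) : Prop :=
  Function.Injective ε ∧ Function.Exact ε (d 0) ∧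
  (∀ i, Function.Exact (d i) (d (i + 1))) ∧
  (∀ i, n < i → ∀ x : G i, x = 0)

/-- `Gwid_R M ≤ n` : `M` has a coresolution of length `n` by Gorenstein weak injective
modules. -/
def GwidLE (M : ModuleCat.{u} R) (n : ℕ) : Prop :=
  ∃ (G : ℕ → ModuleCat.{u} R) (d : ∀ i, G i →ₗ[R] G (i + 1)) (ε : M →ₗ[R] G 0),
    IsFiniteCoresolution R M n G d ε ∧ ∀ i, GorensteinWeakInjective R (G i)

/-- The Gorenstein weak injective dimension, as an element of `ℕ∞`. -/
def Gwid (M : ModuleCat.{u} R) : ℕ∞ :=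
  sInf {c : ℕ∞ | ∃ n : ℕ, c = n ∧ GwidLE R M n}

/-- `Gid_R M ≤ n`, via coresolutions by Gorenstein injective modules. -/
def GidLE (M : ModuleCat.{u} R) (n : ℕ) : Prop :=
  ∃ (G : ℕ → ModuleCat.{u} R) (d : ∀ i, G i →ₗ[R] G (i + 1)) (ε : M →ₗ[R] G 0),
    IsFiniteCoresolution R M n G d ε ∧ ∀ i, GorensteinInjective R (G i)

/-- The Gorenstein injective dimension, as an element of `ℕ∞`. -/
def Gid (M : ModuleCat.{u} R) : ℕ∞ :=
  sInf {c : ℕ∞ | ∃ n : ℕ, c = n ∧ GidLE R M n}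

/-- `id_R M ≤ n`, via coresolutions by injective modules. -/
def IdLE (M : ModuleCat.{u} R) (n : ℕ) : Prop :=
  ∃ (G : ℕ → ModuleCat.{u} R) (d : ∀ i, G i →ₗ[R] G (i + 1)) (ε : M →ₗ[R] G 0),
    IsFiniteCoresolution R M n G d ε ∧ ∀ i, Module.Injective R (G i)

/-- The injective dimension, as an element of `ℕ∞`. -/
def Idim (M : ModuleCat.{u} R) : ℕ∞ :=
  sInf {c : ℕ∞ | ∃ n : ℕ, c = n ∧ IdLE R M n}

/-- The data of an exact sequence `0 → P_n → ⋯ → P_0 → M → 0`. -/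
def IsFiniteResolution (M : ModuleCat.{u} R) (n : ℕ) (P : ℕ → ModuleCat.{u} R)
    (d : ∀ i, P (i + 1) →ₗ[R] P i) (ε : P 0 →ₗ[R] M) : Prop :=
  Function.Surjective ε ∧ Function.Exact (d 0) ε ∧
  (∀ i, Function.Exact (d (i + 1)) (d i)) ∧
  (∀ i, n < i → ∀ x : P i, x = 0)

/-- `pd_R M ≤ n`, via resolutions by projective modules. -/
def PdLE (M : ModuleCat.{u} R) (n : ℕ) : Prop :=
  ∃ (P : ℕ → ModuleCat.{u} R) (d : ∀ i, P (i + 1) →ₗ[R] P i) (ε : P 0 →ₗ[R] M),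
    IsFiniteResolution R M n P d ε ∧ ∀ i, Module.Projective R (P i)

end

variable (R : Type u) [Ring R]

/-- A short exact sequence `0 → L → M → N → 0` of `R`-modules. -/
def ShortExactSeq (L M N : ModuleCat.{u} R) (f : L →ₗ[R] M) (g : M →ₗ[R] N) : Prop :=
  Function.Injective f ∧ Function.Surjective g ∧ Function.Exact f g

/-- Exactness of `0 → Hom(C, X) → Hom(B, X) → Hom(A, X) → 0` induced by
`0 → A → B → C → 0`. -/
def HomContraExact (X : ModuleCat.{u} R) {A B C : ModuleCat.{u} R}
    (f : A →ₗ[R] B) (g : B →ₗ[R] C) : Prop :=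
  Function.Injective (fun h : C →ₗ[R] X => h.comp g) ∧
  Function.Exact (fun h : C →ₗ[R] X => h.comp g) (fun h : B →ₗ[R] X => h.comp f) ∧
  Function.Surjective (fun h : B →ₗ[R] X => h.comp f)

/-- A short exact sequence is `GWI`-copure exact if `Hom_R(-, X)` leaves it exact for
every Gorenstein weak injective module `X`. -/
def GWICopureExact {A B C : ModuleCat.{u} R} (f : A →ₗ[R] B) (g : B →ₗ[R] C) : Prop :=
  ShortExactSeq R A B C f g ∧
  ∀ X : ModuleCat.{u} R, GorensteinWeakInjective R X → HomContraExact R X f g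

/-- `M` is `GWI`-copure injective if `Hom_R(-, M)` is exact on every `GWI`-copure exact
sequence. -/
def GWICopureInjectiveMod (M : ModuleCat.{u} R) : Prop :=
  ∀ (A B C : ModuleCat.{u} R) (f : A →ₗ[R] B) (g : B →ₗ[R] C),
    GWICopureExact R f g → HomContraExact R M f g

/-- `φ : M → G` is a Gorenstein weak injective preenvelope of `M`. -/
def GWIPreenvelope (M G : ModuleCat.{u} R) (φ : M →ₗ[R] G) : Prop :=
  GorensteinWeakInjective R G ∧
  ∀ G' : ModuleCat.{u} R, GorensteinWeakInjective R G' →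
    ∀ f : M →ₗ[R] G', ∃ g : G →ₗ[R] G', g.comp φ = f

/-- A `WI`-pure Tate injective resolution of `M` : an injective resolution
`0 → M → E^0 → E^1 → ⋯`, a `WI`-pure exact complex `T` of injectives, and a chain map
`u : E → T` which is an isomorphism in all sufficiently large degrees. -/
def WIPureTateInjectiveResolution (M : ModuleCat.{u} R)
    (E : ℕ → ModuleCat.{u} R) (dE : ∀ n, E n →ₗ[R] E (n + 1)) (ε : M →ₗ[R] E 0)
    (T : ℤ → ModuleCat.{u} R) (dT : ∀ n : ℤ, T n →ₗ[R] T (n + 1))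
    (u : ∀ n : ℕ, E n →ₗ[R] T n) : Prop :=
  (∀ n, Module.Injective R (E n)) ∧ Function.Injective ε ∧
  Function.Exact ε (dE 0) ∧ (∀ n, Function.Exact (dE n) (dE (n + 1))) ∧
  IsTotallyAcyclicInjComplex R (WeakInjective R) T dT ∧
  (∀ n : ℕ, (dT n).comp (u n) = (u (n + 1)).comp (dE n)) ∧
  ∃ N : ℕ, ∀ n, N ≤ n → Function.Bijective (u n)

/-- Vanishing of the relative Tate cohomology `Êxt^i_GWI(N, M)` for all `i ∈ ℤ`,
computed from the `WI`-pure exact complex `T` : the complex `Hom_R(N, T)` is exact. -/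
def ExtHatVanishesAll (N : ModuleCat.{u} R) (T : ℤ → ModuleCat.{u} R)
    (dT : ∀ n : ℤ, T n →ₗ[R] T (n + 1)) : Prop :=
  ∀ n : ℤ, Function.Exact (fun g : N →ₗ[R] T n => (dT n).comp g)
    (fun g : N →ₗ[R] T (n + 1) => (dT (n + 1)).comp g)

/-- Every morphism to `N` from a module of the test class `𝒯`, or from `R`, lifts along `π`. -/
def LiftSurjective (𝒯 : ModuleCat.{u} R → Prop) {M N : ModuleCat.{u} R} (π : M →ₗ[R] N) : Prop :=
  ∀ W : ModuleCat.{u} R, 𝒯 W ∨ W = ModuleCat.of R R → ∀ h : W →ₗ[R] N, ∃ k : W →ₗ[R] M,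
    π.comp k = h

/-- Exactness of `A → B → C`, also after applying `Hom_R(W, -)` for every `W` in `𝒯`. -/
def LiftExact (𝒯 : ModuleCat.{u} R → Prop) {A B C : ModuleCat.{u} R}
    (f : A →ₗ[R] B) (g : B →ₗ[R] C) : Prop :=
  g.comp f = 0 ∧ ∀ W : ModuleCat.{u} R, 𝒯 W ∨ W = ModuleCat.of R R →
    ∀ h : W →ₗ[R] B, g.comp h = 0 → ∃ k : W →ₗ[R] A, f.comp k = h

/-- `M` has a `Hom(𝒯, -)`-exact left resolution by injective modules. -/
def HasLeftInjResolution (𝒯 : ModuleCat.{u} R → Prop) (M : ModuleCat.{u} R) : Prop :=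
  ∃ (P : ℕ → ModuleCat.{u} R) (d : ∀ n, P (n + 1) →ₗ[R] P n) (π : P 0 →ₗ[R] M),
    (∀ n, Module.Injective R (P n)) ∧ LiftSurjective R 𝒯 π ∧ LiftExact R 𝒯 (d 0) π ∧
    ∀ n, LiftExact R 𝒯 (d (n + 1)) (d n)

/-- `M` has a `Hom(𝒯, -)`-exact injective resolution. -/
def HasRightInjResolution (𝒯 : ModuleCat.{u} R → Prop) (M : ModuleCat.{u} R) : Prop :=
  ∃ (E : ℕ → ModuleCat.{u} R) (d : ∀ n, E n →ₗ[R] E (n + 1)) (ι : M →ₗ[R] E 0),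
    (∀ n, Module.Injective R (E n)) ∧ Function.Injective ι ∧ LiftExact R 𝒯 ι (d 0) ∧
    ∀ n, LiftExact R 𝒯 (d n) (d (n + 1))

section

variable {R} {𝒯 : ModuleCat.{u} R → Prop}

theorem LinearMap.exists_comp_eq_of_surjective {A B C : ModuleCat.{u} R} {p : A →ₗ[R] B}
    (hp : Function.Surjective p) {g : A →ₗ[R] C} (h : ∀ x, p x = 0 → g x = 0) :
    ∃ k : B →ₗ[R] C, k.comp p = g := by
  refine ⟨((LinearMap.ker p).liftQ g fun x hx => h x hx).comp
    (p.quotKerEquivOfSurjective hp).symm.toLinearMap, LinearMap.ext fun x => ?_⟩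
  have : (p.quotKerEquivOfSurjective hp).symm (p x) = (LinearMap.ker p).mkQ x := by
    rw [LinearEquiv.symm_apply_eq]; rfl
  exact congrArg ((LinearMap.ker p).liftQ g fun x hx => h x hx) this

theorem LinearMap.exists_comp_eq_of_injective {W A B : ModuleCat.{u} R} {f : A →ₗ[R] B}
    (hf : Function.Injective f) {h : W →ₗ[R] B} (hh : ∀ w, ∃ a, f a = h w) :
    ∃ k : W →ₗ[R] A, f.comp k = h := by
  refine ⟨(LinearEquiv.ofInjective f hf).symm.toLinearMap.comp (h.codRestrict _ hh),
    LinearMap.ext fun w => ?_⟩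
  have := (LinearEquiv.ofInjective f hf).apply_symm_apply (h.codRestrict _ hh w)
  exact congrArg Subtype.val this

theorem Module.Injective.exists_comp_eq {Q A B : ModuleCat.{u} R} (hQ : Module.Injective R Q)
    {u : A →ₗ[R] B} {g : A →ₗ[R] Q} (h : ∀ x, u x = 0 → g x = 0) :
    ∃ k : B →ₗ[R] Q, k.comp u = g := by
  obtain ⟨g', hg'⟩ := LinearMap.exists_comp_eq_of_surjective
    (B := ModuleCat.of R (LinearMap.range u)) (p := u.rangeRestrict)
    u.surjective_rangeRestrict (g := g) (fun x hx => h x (congrArg Subtype.val hx))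
  obtain ⟨k, hk⟩ := hQ.out (LinearMap.range u).subtype (Submodule.subtype_injective _) g'
  exact ⟨k, LinearMap.ext fun x => (hk (u.rangeRestrict x)).trans (LinearMap.congr_fun hg' x)⟩

theorem LiftSurjective.surjective {M N : ModuleCat.{u} R} {π : M →ₗ[R] N}
    (h : LiftSurjective R 𝒯 π) : Function.Surjective π := fun y => by
  obtain ⟨k, hk⟩ := h (ModuleCat.of R R) (Or.inr rfl) (LinearMap.toSpanSingleton R N y)
  exact ⟨k (1 : R), (LinearMap.congr_fun hk (1 : R)).trans (by simp)⟩

theorem LiftExact.exact {A B C : ModuleCat.{u} R} {f : A →ₗ[R] B} {g : B →ₗ[R] C}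
    (h : LiftExact R 𝒯 f g) : Function.Exact f g := fun y => by
  refine ⟨fun hy => ?_, ?_⟩
  · obtain ⟨k, hk⟩ := h.2 (ModuleCat.of R R) (Or.inr rfl) (LinearMap.toSpanSingleton R B y)
      (LinearMap.ext fun x => by simp [hy])
    exact ⟨k (1 : R), (LinearMap.congr_fun hk (1 : R)).trans (by simp)⟩
  · rintro ⟨x, rfl⟩
    exact LinearMap.congr_fun h.1 x

theorem liftExact_iff {A B C : ModuleCat.{u} R} {f : A →ₗ[R] B} {g : B →ₗ[R] C} :
    LiftExact R 𝒯 f g ↔ Function.Exact f g ∧ ∀ W : ModuleCat.{u} R, 𝒯 W →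
      Function.Exact (fun h : W →ₗ[R] A => f.comp h) (fun h : W →ₗ[R] B => g.comp h) := by
  refine ⟨fun h => ⟨h.exact, fun W hW k => ⟨h.2 W (Or.inl hW) k, ?_⟩⟩,
    fun ⟨h, hW⟩ => ⟨LinearMap.ext h.apply_apply_eq_zero, ?_⟩⟩
  · rintro ⟨l, rfl⟩
    exact LinearMap.ext fun x => LinearMap.congr_fun h.1 (l x)
  · rintro W (hT | rfl) k hk
    · exact (hW W hT k).1 hk
    · obtain ⟨x, hx⟩ := (h (k (1 : R))).1 (LinearMap.congr_fun hk (1 : R))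
      refine ⟨LinearMap.toSpanSingleton R A x, LinearMap.ext_ring ?_⟩
      simpa using hx

theorem LiftExact.of_injective {A B C : ModuleCat.{u} R} {f : A →ₗ[R] B} {g : B →ₗ[R] C}
    (hf : Function.Injective f) (h : Function.Exact f g) : LiftExact R 𝒯 f g :=
  ⟨LinearMap.ext h.apply_apply_eq_zero, fun _ _ k hk =>
    LinearMap.exists_comp_eq_of_injective hf fun w => (h (k w)).1 (LinearMap.congr_fun hk w)⟩

theorem LiftExact.comp_liftSurjective {A M B C : ModuleCat.{u} R} {π : A →ₗ[R] M}
    {ι : M →ₗ[R] B} {g : B →ₗ[R] C} (h : LiftExact R 𝒯 ι g) (hπ : LiftSurjective R 𝒯 π) :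
    LiftExact R 𝒯 (ι.comp π) g := by
  refine ⟨by rw [← LinearMap.comp_assoc, h.1, LinearMap.zero_comp], fun W hW k hk => ?_⟩
  obtain ⟨l, rfl⟩ := h.2 W hW k hk
  obtain ⟨m, rfl⟩ := hπ W hW l
  exact ⟨m, rfl⟩

theorem LiftExact.comp_injective {A B M C : ModuleCat.{u} R} {f : A →ₗ[R] B}
    {π : B →ₗ[R] M} {ι : M →ₗ[R] C} (h : LiftExact R 𝒯 f π) (hι : Function.Injective ι) :
    LiftExact R 𝒯 f (ι.comp π) := by
  refine ⟨by rw [LinearMap.comp_assoc, h.1, LinearMap.comp_zero], fun W hW k hk => ?_⟩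
  refine h.2 W hW k (LinearMap.ext fun x => hι ?_)
  simpa using LinearMap.congr_fun hk x

theorem gorensteinRelInjective_iff {M : ModuleCat.{u} R} :
    GorensteinRelInjective R 𝒯 M ↔
      HasLeftInjResolution R 𝒯 M ∧ HasRightInjResolution R 𝒯 M := by
  constructor
  · rintro ⟨I, d, π, ⟨hI, hd, hW⟩, hπ, hdπ⟩
    have hL (n : ℤ) : LiftExact R 𝒯 (d n) (d (n + 1)) :=
      liftExact_iff.2 ⟨hd n, fun W hT => hW W hT n⟩
    have h0 : Function.Exact (d (-1)) (d 0) := hd (-1)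
    have hL0 : LiftExact R 𝒯 (d (-1)) (d 0) := hL (-1)
    have hker (x : I 0) : π x = 0 ↔ d 0 x = 0 := (hdπ x).trans (h0 x).symm
    obtain ⟨ι, hι⟩ := LinearMap.exists_comp_eq_of_surjective hπ (g := d 0) fun x => (hker x).1
    have hιπ (x : I 0) : ι (π x) = d 0 x := LinearMap.congr_fun hι x
    have hinj : Function.Injective ι := by
      refine (injective_iff_map_eq_zero ι).2 fun m hm => ?_
      obtain ⟨x, rfl⟩ := hπ m
      exact (hker x).2 ((hιπ x).symm.trans hm)
    have hL1 : LiftExact R 𝒯 (d 0) (d 1) := hL 0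
    have hex : Function.Exact ι (d 1) := fun y => by
      refine (hL1.exact y).trans ⟨?_, ?_⟩
      · rintro ⟨x, rfl⟩
        exact ⟨π x, hιπ x⟩
      · rintro ⟨m, rfl⟩
        obtain ⟨x, rfl⟩ := hπ m
        exact ⟨x, (hιπ x).symm⟩
    refine ⟨⟨fun n => match n with
        | 0 => I 0
        | n + 1 => I (Int.negSucc n),
      fun n => match n with
        | 0 => d (Int.negSucc 0)
        | n + 1 => d (Int.negSucc (n + 1)), π, ?_, ?_, ?_, ?_⟩,
      ⟨fun n => I (Int.ofNat (n + 1)), fun n => d (Int.ofNat (n + 1)), ι, fun n => hI _, hinj,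
        LiftExact.of_injective hinj hex, fun n => hL (Int.ofNat (n + 1))⟩⟩
    · rintro (_ | n) <;> exact hI _
    · intro W hT h
      obtain ⟨k, hk⟩ := hL1.2 W hT (ι.comp h) (LinearMap.ext fun w => hex.apply_apply_eq_zero _)
      exact ⟨k, LinearMap.ext fun w => hinj ((hιπ _).trans (LinearMap.congr_fun hk w))⟩
    · exact ⟨LinearMap.ext hdπ.apply_apply_eq_zero, fun W hT h hh =>
        hL0.2 W hT h (LinearMap.ext fun w => (hker _).1 (LinearMap.congr_fun hh w))⟩
    · rintro (_ | n)
      · exact hL (Int.negSucc 1)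
      · exact hL (Int.negSucc (n + 2))
  · rintro ⟨⟨P, p, π, hP, hπ, hpπ, hp⟩, ⟨E, e, ι, hE, hι, hιe, he⟩⟩
    let I : ℤ → ModuleCat.{u} R := fun n => match n with
      | Int.ofNat 0 => P 0
      | Int.ofNat (n + 1) => E n
      | Int.negSucc n => P (n + 1)
    let d : ∀ n : ℤ, I n →ₗ[R] I (n + 1) := fun n => match n with
      | Int.ofNat 0 => ι.comp π
      | Int.ofNat (n + 1) => e n
      | Int.negSucc 0 => p 0
      | Int.negSucc (n + 1) => p (n + 1)
    have hd (n : ℤ) : LiftExact R 𝒯 (d n) (d (n + 1)) := match n with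
      | Int.ofNat 0 => hιe.comp_liftSurjective hπ
      | Int.ofNat (n + 1) => he n
      | Int.negSucc 0 => hpπ.comp_injective hι
      | Int.negSucc 1 => hp 0
      | Int.negSucc (n + 2) => hp (n + 1)
    refine ⟨I, d, π, ⟨?_, fun n => (hd n).exact, fun W hT n => (liftExact_iff.1 (hd n)).2 W hT⟩,
      hπ.surjective, hpπ.exact⟩
    rintro ((_ | n) | n)
    exacts [hP 0, hE n, hP (n + 1)]

theorem HasLeftInjResolution.exists_shortExactSeq {M : ModuleCat.{u} R}
    (h : HasLeftInjResolution R 𝒯 M) :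
    ∃ (L I : ModuleCat.{u} R) (f : L →ₗ[R] I) (g : I →ₗ[R] M), ShortExactSeq R L I M f g ∧
      Module.Injective R I ∧ LiftSurjective R 𝒯 g ∧ HasLeftInjResolution R 𝒯 L := by
  obtain ⟨P, p, π, hP, hπ, hpπ, hp⟩ := h
  have hf : Function.Injective (LinearMap.ker π).subtype := Submodule.subtype_injective _
  let q : P 1 →ₗ[R] LinearMap.ker π := (p 0).codRestrict _ (LinearMap.congr_fun hpπ.1)
  have hq : (LinearMap.ker π).subtype.comp q = p 0 := rfl
  refine ⟨ModuleCat.of R (LinearMap.ker π), P 0, (LinearMap.ker π).subtype, π,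
    ⟨hf, hπ.surjective, π.exact_subtype_ker_map⟩, hP 0, hπ,
    fun n => P (n + 1), fun n => p (n + 1), q, fun n => hP _, fun W hW h => ?_, ⟨?_, ?_⟩,
    fun n => hp (n + 1)⟩
  · obtain ⟨k, hk⟩ := hpπ.2 W hW ((LinearMap.ker π).subtype.comp h)
      (LinearMap.ext fun w => (h w).2)
    exact ⟨k, LinearMap.ext fun w => hf (LinearMap.congr_fun hk w)⟩
  · exact LinearMap.ext fun x => hf (LinearMap.congr_fun (hp 0).1 x)
  · exact fun W hW h hh => (hp 0).2 W hW h
      (LinearMap.ext fun w => congrArg Subtype.val (LinearMap.congr_fun hh w))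

theorem HasLeftInjResolution.of_shortExactSeq {L I M : ModuleCat.{u} R} {f : L →ₗ[R] I}
    {g : I →ₗ[R] M} (hfg : ShortExactSeq R L I M f g) (hI : Module.Injective R I)
    (hg : LiftSurjective R 𝒯 g) (h : HasLeftInjResolution R 𝒯 L) :
    HasLeftInjResolution R 𝒯 M := by
  obtain ⟨P, p, π, hP, hπ, hpπ, hp⟩ := h
  refine ⟨fun n => match n with
      | 0 => I
      | n + 1 => P n,
    fun n => match n with
      | 0 => f.comp π
      | n + 1 => p n, g, ?_, hg,
    (LiftExact.of_injective hfg.1 hfg.2.2).comp_liftSurjective hπ, ?_⟩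
  · rintro (_ | n)
    exacts [hI, hP n]
  · rintro (_ | n)
    exacts [hpπ.comp_injective hfg.1, hp n]

theorem HasRightInjResolution.left_of_shortExactSeq {L I M : ModuleCat.{u} R} {f : L →ₗ[R] I}
    {g : I →ₗ[R] M} (hfg : ShortExactSeq R L I M f g) (hI : Module.Injective R I)
    (hg : LiftSurjective R 𝒯 g) (h : HasRightInjResolution R 𝒯 M) :
    HasRightInjResolution R 𝒯 L := by
  obtain ⟨E, e, ι, hE, hι, hιe, he⟩ := h
  refine ⟨fun n => match n with
      | 0 => I
      | n + 1 => E n,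
    fun n => match n with
      | 0 => ι.comp g
      | n + 1 => e n, f, ?_, hfg.1,
    (LiftExact.of_injective hfg.1 hfg.2.2).comp_injective hι, ?_⟩
  · rintro (_ | n)
    exacts [hI, hE n]
  · rintro (_ | n)
    exacts [hιe.comp_liftSurjective hg, he n]

/-- `Ext^1_R(W, L) = 0` for `W` in `𝒯`, expressed as a lifting property. -/
theorem HasRightInjResolution.liftSurjective {L I M : ModuleCat.{u} R} {f : L →ₗ[R] I}
    {g : I →ₗ[R] M} (hfg : ShortExactSeq R L I M f g) (h : HasRightInjResolution R 𝒯 L) :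
    LiftSurjective R 𝒯 g := by
  obtain ⟨E, e, ι, hE, hι, hιe, he⟩ := h
  obtain ⟨β, hβ⟩ := (hE 0).exists_comp_eq (u := f) (g := ι) fun x hx => by
    rw [(injective_iff_map_eq_zero f).1 hfg.1 x hx, map_zero]
  have hβ' (l : L) : β (f l) = ι l := LinearMap.congr_fun hβ l
  obtain ⟨φ, hφ⟩ := LinearMap.exists_comp_eq_of_surjective hfg.2.1 (g := (e 0).comp β)
    fun x hx => by
      obtain ⟨l, rfl⟩ := (hfg.2.2 x).1 hx
      exact (congrArg (e 0) (hβ' l)).trans (hιe.exact.apply_apply_eq_zero l)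
  have hφ' (x : I) : φ (g x) = e 0 (β x) := LinearMap.congr_fun hφ x
  intro W hW h
  obtain ⟨k, hk⟩ := (he 0).2 W hW (φ.comp h) (LinearMap.ext fun w => by
    obtain ⟨x, hx⟩ := hfg.2.1 (h w)
    simpa [← hx, hφ'] using (he 0).exact.apply_apply_eq_zero (β x))
  have hinj : Function.Injective (g.prod β) := by
    refine (injective_iff_map_eq_zero (g.prod β)).2 fun x hx => ?_
    obtain ⟨l, rfl⟩ := (hfg.2.2 x).1 (congrArg Prod.fst hx)
    have : ι l = 0 := (hβ' l).symm.trans (congrArg Prod.snd hx)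
    rw [(injective_iff_map_eq_zero ι).1 hι l this, map_zero]
  -- `x ↦ (g x, β x)` identifies `I` with the pullback of `φ` and `e 0`.
  obtain ⟨m, hm⟩ := LinearMap.exists_comp_eq_of_injective
    (B := ModuleCat.of R (M × E 0)) hinj (h := h.prod k) fun w => by
      obtain ⟨x, hx⟩ := hfg.2.1 (h w)
      have hkw : e 0 (k w) = φ (h w) := LinearMap.congr_fun hk w
      obtain ⟨l, hl⟩ := (hιe.exact (k w - β x)).1 (by rw [map_sub, hkw, ← hx, hφ', sub_self])
      refine ⟨x + f l, Prod.ext ?_ ?_⟩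
      · simp [hx, hfg.2.2.apply_apply_eq_zero]
      · simp [hβ', hl]
  exact ⟨m, LinearMap.ext fun w => congrArg Prod.fst (LinearMap.congr_fun hm w)⟩

theorem Module.Injective.prod_of {A B : ModuleCat.{u} R} (hA : Module.Injective R A)
    (hB : Module.Injective R B) : Module.Injective R (ModuleCat.of R (A × B)) where
  out X Y _ _ _ _ u hu g := by
    obtain ⟨a, ha⟩ := hA.out u hu ((LinearMap.fst R A B).comp g)
    obtain ⟨b, hb⟩ := hB.out u hu ((LinearMap.snd R A B).comp g)
    exact ⟨a.prod b, fun x => Prod.ext (ha x) (hb x)⟩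

/-- If `0 → L → I → M → 0` is exact with `I` injective and `0 → L → E⁰ → E¹ → ⋯` is a
`Hom(𝒯, -)`-exact injective resolution, then so is
`0 → M → I × E¹ → E⁰ × E² → E³ → E⁴ → ⋯`. -/
theorem HasRightInjResolution.right_of_shortExactSeq {L I M : ModuleCat.{u} R}
    {f : L →ₗ[R] I} {g : I →ₗ[R] M} (hfg : ShortExactSeq R L I M f g)
    (hI : Module.Injective R I) (h : HasRightInjResolution R 𝒯 L) :
    HasRightInjResolution R 𝒯 M := by
  obtain ⟨E, e, ι, hE, hι, hιe, he⟩ := h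
  obtain ⟨β, hβ⟩ := (hE 0).exists_comp_eq (u := f) (g := ι) fun x hx => by
    rw [(injective_iff_map_eq_zero f).1 hfg.1 x hx, map_zero]
  obtain ⟨α, hα⟩ := hI.exists_comp_eq (u := ι) (g := f) fun x hx => by
    rw [(injective_iff_map_eq_zero ι).1 hι x hx, map_zero]
  have hβ' (l : L) : β (f l) = ι l := LinearMap.congr_fun hβ l
  have hα' (l : L) : α (ι l) = f l := LinearMap.congr_fun hα l
  obtain ⟨γ, hγ⟩ := (hE 0).exists_comp_eq (u := e 0) (g := LinearMap.id - β.comp α)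
    fun x hx => by
      obtain ⟨l, rfl⟩ := (hιe.exact x).1 hx
      simp [hα', hβ']
  have hγ' (x : E 0) : γ (e 0 x) = x - β (α x) := LinearMap.congr_fun hγ x
  obtain ⟨j, hj⟩ := LinearMap.exists_comp_eq_of_surjective
    (C := ModuleCat.of R (I × E 1)) hfg.2.1
    (g := (LinearMap.id - α.comp β).prod ((e 0).comp β)) fun x hx => by
      obtain ⟨l, rfl⟩ := (hfg.2.2 x).1 hx
      simp [hα', hβ', hιe.exact.apply_apply_eq_zero]
  have hj' (x : I) : j (g x) = (x - α (β x), e 0 (β x)) := LinearMap.congr_fun hj x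
  have he0 (x : E 0) : e 1 (e 0 x) = 0 := (he 0).exact.apply_apply_eq_zero x
  have he1 (x : E 1) : e 2 (e 1 x) = 0 := (he 1).exact.apply_apply_eq_zero x
  have hjinj : Function.Injective j := by
    refine (injective_iff_map_eq_zero j).2 fun m hm => ?_
    obtain ⟨x, rfl⟩ := hfg.2.1 m
    rw [hj'] at hm
    obtain ⟨l, hl⟩ := (hιe.exact (β x)).1 (congrArg Prod.snd hm)
    have hx : x = f l := by rw [← hα', hl]; exact sub_eq_zero.1 (congrArg Prod.fst hm)
    rw [hx, hfg.2.2.apply_apply_eq_zero]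
  let s : ModuleCat.of R (I × E 1) →ₗ[R] ModuleCat.of R (E 0 × E 2) :=
    (β.comp (LinearMap.fst R I (E 1)) - γ.comp (LinearMap.snd R I (E 1))).prod
      ((e 1).comp (LinearMap.snd R I (E 1)))
  let t : ModuleCat.of R (E 0 × E 2) →ₗ[R] E 3 := (e 2).comp (LinearMap.snd R (E 0) (E 2))
  have hs (x : I) (y : E 1) : s (x, y) = (β x - γ y, e 1 y) := rfl
  have hjs : Function.Exact j s := by
    rintro ⟨x, y⟩
    constructor
    · intro hxy
      rw [hs] at hxy
      obtain ⟨z, rfl⟩ := ((he 0).exact y).1 (congrArg Prod.snd hxy)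
      have hz : β x = z - β (α z) := by
        rw [← hγ']; exact sub_eq_zero.1 (congrArg Prod.fst hxy)
      refine ⟨g (x + α z), ?_⟩
      rw [hj', map_add β, hz]
      simp
    · rintro ⟨m, hm⟩
      obtain ⟨z, rfl⟩ := hfg.2.1 m
      rw [← hm, hj', hs]
      simp [hγ', he0]
  have hst : LiftExact R 𝒯 s t := by
    refine ⟨LinearMap.ext fun x => he1 x.2, fun W hW k hk => ?_⟩
    obtain ⟨y, hy⟩ := (he 1).2 W hW ((LinearMap.snd R (E 0) (E 2)).comp k) hk
    let z : W →ₗ[R] E 0 := -((LinearMap.fst R (E 0) (E 2)).comp k + γ.comp y)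
    refine ⟨(-(α.comp z)).prod (y + (e 0).comp z), LinearMap.ext fun w => Prod.ext ?_ ?_⟩
    · change β (-α (z w)) - γ (y w + e 0 (z w)) = (k w).1
      have hz : z w = -((k w).1 + γ (y w)) := rfl
      rw [map_add, map_neg, hγ']
      rw [show -β (α (z w)) - (γ (y w) + (z w - β (α (z w)))) = -γ (y w) - z w by abel, hz]
      abel
    · change e 1 (y w + e 0 (z w)) = (k w).2
      rw [map_add, he0, add_zero]
      exact LinearMap.congr_fun hy w
  have ht : LiftExact R 𝒯 t (e 3) := by
    refine ⟨LinearMap.ext fun x => (he 2).exact.apply_apply_eq_zero x.2, fun W hW k hk => ?_⟩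
    obtain ⟨y, hy⟩ := (he 2).2 W hW k hk
    exact ⟨(0 : W →ₗ[R] E 0).prod y, hy⟩
  refine ⟨fun n => match n with
      | 0 => ModuleCat.of R (I × E 1)
      | 1 => ModuleCat.of R (E 0 × E 2)
      | n + 2 => E (n + 3),
    fun n => match n with
      | 0 => s
      | 1 => t
      | n + 2 => e (n + 3), j, ?_, hjinj, LiftExact.of_injective hjinj hjs, ?_⟩
  · rintro (_ | _ | n)
    exacts [hI.prod_of (hE 1), (hE 0).prod_of (hE 2), hE _]
  · rintro (_ | _ | n)
    exacts [hst, ht, he _]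

end

/-- `M` is Gorenstein weak injective iff there is a short exact sequence
`0 → L → I → M → 0` with `I` injective and `L` Gorenstein weak injective. -/
theorem gorensteinWeakInjective_iff_exists_ses (M : ModuleCat.{u} R) :
    GorensteinWeakInjective R M ↔
      ∃ (L I : ModuleCat.{u} R) (f : L →ₗ[R] I) (g : I →ₗ[R] M),
        ShortExactSeq R L I M f g ∧ Module.Injective R I ∧
        GorensteinWeakInjective R L := by
  constructor
  · intro hM
    obtain ⟨hl, hr⟩ := gorensteinRelInjective_iff.1 hM
    obtain ⟨L, I, f, g, hfg, hI, hg, hL⟩ := hl.exists_shortExactSeq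
    exact ⟨L, I, f, g, hfg, hI,
      gorensteinRelInjective_iff.2 ⟨hL, hr.left_of_shortExactSeq hfg hI hg⟩⟩
  · rintro ⟨L, I, f, g, hfg, hI, hL⟩
    obtain ⟨hl, hr⟩ := gorensteinRelInjective_iff.1 hL
    exact gorensteinRelInjective_iff.2
      ⟨hl.of_shortExactSeq hfg hI (hr.liftSurjective hfg), hr.right_of_shortExactSeq hfg hI⟩
end

section
/- The class of Gorenstein weak injective R-modules is injectively resolving: it contains all injective modules, and for any short exact sequence 0 → L → M → N → 0 with L Gorenstein weak injective, M is Gorenstein weak injective if and only if N is. -/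
open CategoryTheory

universe u

variable (R : Type u) [Ring R]

section Resolving

variable {R}

lemma ShortExactSeq.shortExact {L M N : ModuleCat.{u} R} {f : L →ₗ[R] M} {g : M →ₗ[R] N}
    (h : ShortExactSeq R L M N f g) :
    (ShortComplex.mk (ModuleCat.ofHom f) (ModuleCat.ofHom g)
      (by ext x; exact h.2.2.apply_apply_eq_zero x)).ShortExact :=
  ModuleCat.shortComplex_shortExact _ h.2.2 h.1 h.2.1

lemma shortExactSeq_ker {M N : ModuleCat.{u} R} {g : M →ₗ[R] N} (hg : Function.Surjective g) :
    ShortExactSeq R (ModuleCat.of R (LinearMap.ker g)) M N (LinearMap.ker g).subtype g :=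
  ⟨Subtype.val_injective, hg, LinearMap.exact_subtype_ker_map g⟩

/-- `Ext^n(W, M) = 0` for all `n ≥ 1` and all `W` in the test class `𝒯`. -/
def ExtAcyclic (𝒯 : ModuleCat.{u} R → Prop) (M : ModuleCat.{u} R) : Prop :=
  ∀ W, 𝒯 W → ∀ n : ℕ, Subsingleton (Abelian.Ext.{u} W M (n + 1))

lemma extAcyclic_of_injective (𝒯 : ModuleCat.{u} R → Prop) (I : ModuleCat.{u} R)
    [Module.Injective R I] : ExtAcyclic 𝒯 I := by
  have : Injective I := Module.injective_object_of_injective_module R I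
  exact fun W _ n => subsingleton_of_forall_eq 0 Abelian.Ext.eq_zero_of_injective

namespace ShortExactSeq

variable {L M N : ModuleCat.{u} R} {f : L →ₗ[R] M} {g : M →ₗ[R] N}

lemma subsingleton_ext_middle (h : ShortExactSeq R L M N f g) {W : ModuleCat.{u} R} {n : ℕ}
    (hL : Subsingleton (Abelian.Ext.{u} W L n)) (hN : Subsingleton (Abelian.Ext.{u} W N n)) :
    Subsingleton (Abelian.Ext.{u} W M n) := by
  refine subsingleton_of_forall_eq 0 fun x => ?_
  obtain ⟨y, rfl⟩ := Abelian.Ext.covariant_sequence_exact₂ W h.shortExact x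
    (Subsingleton.elim (α := Abelian.Ext.{u} W N n) _ _)
  rw [Subsingleton.elim (α := Abelian.Ext.{u} W L n) y 0, Abelian.Ext.zero_comp]

lemma subsingleton_ext_right (h : ShortExactSeq R L M N f g) {W : ModuleCat.{u} R} {n : ℕ}
    (hM : Subsingleton (Abelian.Ext.{u} W M n))
    (hL : Subsingleton (Abelian.Ext.{u} W L (n + 1))) :
    Subsingleton (Abelian.Ext.{u} W N n) := by
  refine subsingleton_of_forall_eq 0 fun x => ?_
  obtain ⟨y, rfl⟩ := Abelian.Ext.covariant_sequence_exact₃ W h.shortExact x rfl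
    (Subsingleton.elim (α := Abelian.Ext.{u} W L (n + 1)) _ _)
  rw [Subsingleton.elim (α := Abelian.Ext.{u} W M n) y 0, Abelian.Ext.zero_comp]

lemma subsingleton_ext_left (h : ShortExactSeq R L M N f g) {W : ModuleCat.{u} R} {n : ℕ}
    (hM : Subsingleton (Abelian.Ext.{u} W M (n + 1)))
    (hN : Subsingleton (Abelian.Ext.{u} W N n)) :
    Subsingleton (Abelian.Ext.{u} W L (n + 1)) := by
  refine subsingleton_of_forall_eq 0 fun x => ?_
  obtain ⟨y, rfl⟩ := Abelian.Ext.covariant_sequence_exact₁ W h.shortExact x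
    (Subsingleton.elim (α := Abelian.Ext.{u} W M (n + 1)) _ _) rfl
  rw [Subsingleton.elim (α := Abelian.Ext.{u} W N n) y 0, Abelian.Ext.zero_comp]

lemma exists_lift (h : ShortExactSeq R L M N f g) {W : ModuleCat.{u} R}
    (hL : Subsingleton (Abelian.Ext.{u} W L 1)) (φ : W →ₗ[R] N) :
    ∃ ψ : W →ₗ[R] M, g.comp ψ = φ := by
  obtain ⟨y, hy⟩ := Abelian.Ext.covariant_sequence_exact₃ W h.shortExact
    (Abelian.Ext.mk₀ (ModuleCat.ofHom φ)) (zero_add 1)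
    (Subsingleton.elim (α := Abelian.Ext.{u} W L 1) _ _)
  obtain ⟨ψ, rfl⟩ := (Abelian.Ext.mk₀_bijective _ _).2 y
  rw [Abelian.Ext.mk₀_comp_mk₀] at hy
  exact ⟨ψ.hom, congrArg ModuleCat.Hom.hom ((Abelian.Ext.mk₀_bijective _ _).1 hy)⟩

/-- If every map from `W` lifts along `M → N` and `M` has no first `Ext` from `W`, neither
has `L`. -/
lemma subsingleton_ext_one_of_lift (h : ShortExactSeq R L M N f g) {W : ModuleCat.{u} R}
    (hM : Subsingleton (Abelian.Ext.{u} W M 1))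
    (hlift : ∀ φ : W →ₗ[R] N, ∃ ψ : W →ₗ[R] M, g.comp ψ = φ) :
    Subsingleton (Abelian.Ext.{u} W L 1) := by
  refine subsingleton_of_forall_eq 0 fun x => ?_
  obtain ⟨y, rfl⟩ := Abelian.Ext.covariant_sequence_exact₁ W h.shortExact x
    (Subsingleton.elim (α := Abelian.Ext.{u} W M 1) _ _) (zero_add 1)
  obtain ⟨φ, rfl⟩ := (Abelian.Ext.mk₀_bijective _ _).2 y
  obtain ⟨ψ, hψ⟩ := hlift φ.hom
  have : φ = ModuleCat.ofHom ψ ≫ ModuleCat.ofHom g := by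
    ext x
    exact (LinearMap.congr_fun hψ x).symm
  rw [this, ← Abelian.Ext.mk₀_comp_mk₀, Abelian.Ext.comp_assoc_of_second_deg_zero,
    ShortComplex.ShortExact.comp_extClass h.shortExact, Abelian.Ext.comp_zero]

variable {𝒯 : ModuleCat.{u} R → Prop}

lemma extAcyclic_middle (h : ShortExactSeq R L M N f g) (hL : ExtAcyclic 𝒯 L)
    (hN : ExtAcyclic 𝒯 N) : ExtAcyclic 𝒯 M :=
  fun W hW n => h.subsingleton_ext_middle (hL W hW n) (hN W hW n)

lemma extAcyclic_right (h : ShortExactSeq R L M N f g) (hL : ExtAcyclic 𝒯 L)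
    (hM : ExtAcyclic 𝒯 M) : ExtAcyclic 𝒯 N :=
  fun W hW n => h.subsingleton_ext_right (hM W hW n) (hL W hW (n + 1))

end ShortExactSeq

lemma injective_prod (I J : ModuleCat.{u} R) [Module.Injective R I] [Module.Injective R J] :
    Module.Injective R (ModuleCat.of R (I × J)) where
  out X Y _ _ _ _ f hf g := by
    obtain ⟨a, ha⟩ := Module.Injective.out f hf ((LinearMap.fst R I J).comp g)
    obtain ⟨b, hb⟩ := Module.Injective.out f hf ((LinearMap.snd R I J).comp g)
    exact ⟨a.prod b, fun x => Prod.ext (ha x) (hb x)⟩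

/-- Every module embeds in an injective module. -/
lemma exists_shortExactSeq_injective (M : ModuleCat.{u} R) :
    ∃ (I N : ModuleCat.{u} R) (f : M →ₗ[R] I) (g : I →ₗ[R] N),
      Module.Injective R I ∧ ShortExactSeq R M I N f g := by
  have : Injective (Injective.under M) := inferInstance
  have hinj : Function.Injective (Injective.ι M).hom :=
    (ModuleCat.mono_iff_injective _).1 inferInstance
  refine ⟨Injective.under M, ModuleCat.of R (_ ⧸ LinearMap.range (Injective.ι M).hom),
    (Injective.ι M).hom, Submodule.mkQ _,
    Module.injective_module_of_injective_object R _, hinj,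
    Submodule.mkQ_surjective _, ?_⟩
  rw [LinearMap.exact_iff, Submodule.ker_mkQ]

/-- The largest class of `𝒯`-acyclic modules each of which is a quotient of an injective module
with kernel in the class. -/
def LeftResolvable (𝒯 : ModuleCat.{u} R → Prop) (M : ModuleCat.{u} R) : Prop :=
  ∃ P : ModuleCat.{u} R → Prop, P M ∧ ∀ Y, P Y → ExtAcyclic 𝒯 Y ∧
    ∃ (I : ModuleCat.{u} R) (p : I →ₗ[R] Y), Module.Injective R I ∧ Function.Surjective p ∧
      P (ModuleCat.of R (LinearMap.ker p))

namespace LeftResolvable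

variable {𝒯 : ModuleCat.{u} R → Prop} {L M N : ModuleCat.{u} R}

lemma extAcyclic (h : LeftResolvable 𝒯 M) : ExtAcyclic 𝒯 M := by
  obtain ⟨P, hM, hP⟩ := h
  exact (hP M hM).1

lemma exists_cover (h : LeftResolvable 𝒯 M) :
    ∃ (I : ModuleCat.{u} R) (p : I →ₗ[R] M), Module.Injective R I ∧ Function.Surjective p ∧
      LeftResolvable 𝒯 (ModuleCat.of R (LinearMap.ker p)) := by
  obtain ⟨P, hM, hP⟩ := h
  obtain ⟨-, I, p, hI, hp, hK⟩ := hP M hM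
  exact ⟨I, p, hI, hp, P, hK, hP⟩

lemma of_cover (hM : ExtAcyclic 𝒯 M) {I : ModuleCat.{u} R} [hI : Module.Injective R I]
    (p : I →ₗ[R] M) (hp : Function.Surjective p)
    (hK : LeftResolvable 𝒯 (ModuleCat.of R (LinearMap.ker p))) : LeftResolvable 𝒯 M := by
  refine ⟨fun Y => Y = M ∨ LeftResolvable 𝒯 Y, Or.inl rfl, ?_⟩
  rintro Y (rfl | hY)
  · exact ⟨hM, I, p, hI, hp, Or.inr hK⟩
  · obtain ⟨J, q, hJ, hq, hK'⟩ := hY.exists_cover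
    exact ⟨hY.extAcyclic, J, q, hJ, hq, Or.inr hK'⟩

/-- Horseshoe step: a cover of the middle term whose kernel is an extension of the kernels. -/
lemma exists_cover_of_extension (h𝒯 : ∀ I : ModuleCat.{u} R, Module.Injective R I → 𝒯 I)
    {f : L →ₗ[R] M} {g : M →ₗ[R] N} (h : ShortExactSeq R L M N f g) (hL : ExtAcyclic 𝒯 L)
    {I J : ModuleCat.{u} R} [Module.Injective R I] [hJ : Module.Injective R J]
    (p : I →ₗ[R] L) (q : J →ₗ[R] N)
    (hp : Function.Surjective p) (hq : Function.Surjective q) :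
    ∃ φ : I × J →ₗ[R] M, Function.Surjective φ ∧
      ∃ (i : LinearMap.ker p →ₗ[R] LinearMap.ker φ) (j : LinearMap.ker φ →ₗ[R] LinearMap.ker q),
        ShortExactSeq R (ModuleCat.of R (LinearMap.ker p)) (ModuleCat.of R (LinearMap.ker φ))
          (ModuleCat.of R (LinearMap.ker q)) i j := by
  obtain ⟨s, hs⟩ := h.exists_lift (hL J (h𝒯 J hJ) 0) q
  replace hs : ∀ b, g (s b) = q b := LinearMap.congr_fun hs
  have hgf : ∀ x, g (f x) = 0 := h.2.2.apply_apply_eq_zero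
  have hlift : ∀ (b : J) (m : M), q b = g m → ∃ a : I, f (p a) + s b = m := by
    intro b m hb
    obtain ⟨l, hl⟩ := (h.2.2 (m - s b)).1 (by rw [map_sub, hs, hb, sub_self])
    obtain ⟨a, rfl⟩ := hp l
    exact ⟨a, by rw [hl, sub_add_cancel]⟩
  refine ⟨(f.comp p).coprod s, fun m => ?_, ?_⟩
  · obtain ⟨b, hb⟩ := hq (g m)
    obtain ⟨a, ha⟩ := hlift b m hb
    exact ⟨(a, b), by simpa using ha⟩
  · refine ⟨(LinearMap.inl R I J).restrict (fun a ha => ?_),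
      (LinearMap.snd R I J).restrict (fun x hx => ?_), fun a b hab => ?_, ?_, ?_⟩
    · rw [LinearMap.mem_ker] at ha ⊢
      simp [ha]
    · rw [LinearMap.mem_ker] at hx ⊢
      have := congrArg g hx
      simpa [hgf, hs] using this
    · have := congrArg (fun x => x.1.1) hab
      exact Subtype.ext this
    · rintro ⟨b, hb⟩
      obtain ⟨a, ha⟩ := hlift b 0 (by rw [map_zero]; exact hb)
      exact ⟨⟨(a, b), by rw [LinearMap.mem_ker]; simpa using ha⟩, rfl⟩
    · rintro ⟨⟨a, b⟩, hab⟩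
      constructor
      · intro hb
        obtain rfl : b = 0 := congrArg Subtype.val hb
        have hpa : f (p a) = 0 := by
          rw [LinearMap.mem_ker] at hab
          simpa using hab
        exact ⟨⟨a, h.1 (by rw [hpa, map_zero])⟩, rfl⟩
      · rintro ⟨a', ha'⟩
        exact Subtype.ext (congrArg (fun x => x.1.2) ha').symm

lemma extension (h𝒯 : ∀ I : ModuleCat.{u} R, Module.Injective R I → 𝒯 I)
    {f : L →ₗ[R] M} {g : M →ₗ[R] N} (h : ShortExactSeq R L M N f g)
    (hL : LeftResolvable 𝒯 L) (hN : LeftResolvable 𝒯 N) : LeftResolvable 𝒯 M := by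
  refine ⟨fun Y => ∃ (A B : ModuleCat.{u} R) (i : A →ₗ[R] Y) (j : Y →ₗ[R] B),
    ShortExactSeq R A Y B i j ∧ LeftResolvable 𝒯 A ∧ LeftResolvable 𝒯 B,
    ⟨L, N, f, g, h, hL, hN⟩, ?_⟩
  rintro Y ⟨A, B, i, j, hij, hA, hB⟩
  refine ⟨hij.extAcyclic_middle hA.extAcyclic hB.extAcyclic, ?_⟩
  obtain ⟨I, p, hI, hp, hKp⟩ := hA.exists_cover
  obtain ⟨J, q, hJ, hq, hKq⟩ := hB.exists_cover
  obtain ⟨φ, hφ, i', j', hij'⟩ := exists_cover_of_extension h𝒯 hij hA.extAcyclic p q hp hq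
  exact ⟨ModuleCat.of R (I × J), φ, injective_prod I J, hφ,
    _, _, i', j', hij', hKp, hKq⟩

lemma cokernel (h𝒯 : ∀ I : ModuleCat.{u} R, Module.Injective R I → 𝒯 I)
    {f : L →ₗ[R] M} {g : M →ₗ[R] N} (h : ShortExactSeq R L M N f g)
    (hL : LeftResolvable 𝒯 L) (hM : LeftResolvable 𝒯 M) : LeftResolvable 𝒯 N := by
  obtain ⟨I, p, hI, hp, hK⟩ := hM.exists_cover
  refine of_cover (h.extAcyclic_right hL.extAcyclic hM.extAcyclic) (g.comp p)
    (h.2.1.comp hp) ?_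
  let i : LinearMap.ker p →ₗ[R] LinearMap.ker (g.comp p) :=
    Submodule.inclusion (LinearMap.ker_le_ker_comp p g)
  let e : L ≃ₗ[R] LinearMap.range f := LinearEquiv.ofInjective f h.1
  let j : LinearMap.ker (g.comp p) →ₗ[R] L := e.symm.toLinearMap.comp
    ((p.comp (LinearMap.ker (g.comp p)).subtype).codRestrict (LinearMap.range f)
      fun x => (h.2.2 _).1 x.2)
  have hj : ∀ x, f (j x) = p x := fun x => by
    have := congrArg Subtype.val (e.apply_symm_apply
      ((p.comp (LinearMap.ker (g.comp p)).subtype).codRestrict (LinearMap.range f)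
      (fun x => (h.2.2 _).1 x.2) x))
    exact this
  refine extension h𝒯 (L := ModuleCat.of R (LinearMap.ker p)) (N := L) (f := i) (g := j)
    ⟨Submodule.inclusion_injective _, fun l => ?_, fun x => ⟨fun hx => ?_, ?_⟩⟩ hK hL
  · obtain ⟨a, ha⟩ := hp (f l)
    refine ⟨⟨a, ?_⟩, h.1 ?_⟩
    · rw [LinearMap.mem_ker, LinearMap.comp_apply, ha, h.2.2.apply_apply_eq_zero]
    · rw [hj, ha]
  · refine ⟨⟨x.1, ?_⟩, rfl⟩
    rw [LinearMap.mem_ker, ← hj, hx, map_zero]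
  · rintro ⟨y, rfl⟩
    refine h.1 ?_
    rw [hj, map_zero]
    exact y.2

end LeftResolvable

/-- `B` is a cosyzygy of the `𝒯`-acyclic module `A`. -/
def AcyclicCosyzygy (𝒯 : ModuleCat.{u} R → Prop) (A B : ModuleCat.{u} R) : Prop :=
  ExtAcyclic 𝒯 A ∧ ∃ (I : ModuleCat.{u} R) (f : A →ₗ[R] I) (g : I →ₗ[R] B),
    Module.Injective R I ∧ ShortExactSeq R A I B f g

variable {𝒯 : ModuleCat.{u} R → Prop}

/-- A left resolvable module sits in a doubly infinite sequence of cosyzygies. -/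
lemma LeftResolvable.exists_cosyzygies {M : ModuleCat.{u} R} (h : LeftResolvable 𝒯 M) :
    ∃ K : ℤ → ModuleCat.{u} R, K 1 = M ∧ ∀ n, AcyclicCosyzygy 𝒯 (K n) (K (n + 1)) := by
  have hleft : ∀ Y : {Y // LeftResolvable 𝒯 Y}, ∃ Z : {Z // LeftResolvable 𝒯 Z},
      AcyclicCosyzygy 𝒯 Z.1 Y.1 := by
    rintro ⟨Y, hY⟩
    obtain ⟨I, p, hI, hp, hK⟩ := hY.exists_cover
    exact ⟨⟨_, hK⟩, hK.extAcyclic, I, _, p, hI, shortExactSeq_ker hp⟩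
  have hright : ∀ Y : {Y // ExtAcyclic 𝒯 Y}, ∃ Z : {Z // ExtAcyclic 𝒯 Z},
      AcyclicCosyzygy 𝒯 Y.1 Z.1 := by
    rintro ⟨Y, hY⟩
    obtain ⟨I, Z, f, g, hI, hfg⟩ := exists_shortExactSeq_injective Y
    exact ⟨⟨Z, hfg.extAcyclic_right hY (extAcyclic_of_injective 𝒯 I)⟩, hY, I, f, g, hI, hfg⟩
  choose l hl using hleft
  choose r hr using hright
  let a : ℕ → {Y // LeftResolvable 𝒯 Y} := fun n => l^[n] ⟨M, h⟩
  let b : ℕ → {Y // ExtAcyclic 𝒯 Y} := fun n => r^[n] ⟨M, h.extAcyclic⟩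
  have ha : ∀ n, AcyclicCosyzygy 𝒯 (a (n + 1)).1 (a n).1 := fun n => by
    simp only [a, Function.iterate_succ_apply']
    exact hl _
  have hb : ∀ n, AcyclicCosyzygy 𝒯 (b n).1 (b (n + 1)).1 := fun n => by
    simp only [b, Function.iterate_succ_apply']
    exact hr _
  let K : ℤ → ModuleCat.{u} R
    | Int.ofNat n => (b n).1
    | Int.negSucc n => (a (n + 1)).1
  have hK : ∀ n, AcyclicCosyzygy 𝒯 (K n) (K (n + 1))
    | Int.ofNat n => hb n
    | Int.negSucc 0 => ha 0
    | Int.negSucc (n + 1) => ha (n + 1)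
  refine ⟨fun n => K (n - 1), rfl, fun n => ?_⟩
  change AcyclicCosyzygy 𝒯 (K (n - 1)) (K (n + 1 - 1))
  rw [add_sub_cancel_right]
  simpa only [sub_add_cancel] using hK (n - 1)

lemma LeftResolvable.gorensteinRelInjective {M : ModuleCat.{u} R} (h : LeftResolvable 𝒯 M) :
    GorensteinRelInjective R 𝒯 M := by
  obtain ⟨K, rfl, hK⟩ := h.exists_cosyzygies
  choose hE I ι p hI hS using hK
  have hι : ∀ n x, p n (ι n x) = 0 := fun n => (hS n).2.2.apply_apply_eq_zero
  refine ⟨I, fun n => (ι (n + 1)).comp (p n), p 0, ⟨hI, fun n x => ⟨fun hx => ?_, ?_⟩,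
    fun W hW n φ => ⟨fun hφ => ?_, ?_⟩⟩, (hS 0).2.1, fun x => ⟨fun hx => ?_, ?_⟩⟩
  · obtain ⟨y, rfl⟩ := ((hS (n + 1)).2.2 x).1 ((hS (n + 1 + 1)).1 (by rw [map_zero]; exact hx))
    obtain ⟨z, rfl⟩ := (hS n).2.1 y
    exact ⟨z, rfl⟩
  · rintro ⟨z, rfl⟩
    simp [hι]
  · have hφ' : ∀ w, p (n + 1) (φ w) = 0 := fun w =>
      (hS (n + 1 + 1)).1 (by rw [map_zero]; exact LinearMap.congr_fun hφ w)
    let e := LinearEquiv.ofInjective (ι (n + 1)) (hS (n + 1)).1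
    let φ' : W →ₗ[R] LinearMap.range (ι (n + 1)) :=
      φ.codRestrict _ fun w => ((hS (n + 1)).2.2 _).1 (hφ' w)
    obtain ⟨ψ, hψ⟩ := (hS n).exists_lift (hE n W hW 0) (e.symm.toLinearMap.comp φ')
    refine ⟨ψ, LinearMap.ext fun w => ?_⟩
    have hw : p n (ψ w) = e.symm (φ' w) := LinearMap.congr_fun hψ w
    change ι (n + 1) (p n (ψ w)) = φ w
    rw [hw]
    exact congrArg Subtype.val (e.apply_symm_apply (φ' w))
  · rintro ⟨ψ, rfl⟩
    ext w
    simp [hι]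
  · obtain ⟨y, rfl⟩ := ((hS 0).2.2 x).1 hx
    obtain ⟨z, hz⟩ := (hS (-1)).2.1 (show K (-1 + 1) from y)
    exact ⟨z, congrArg (ι 0) hz⟩
  · rintro ⟨z, rfl⟩
    exact hι 0 _

namespace IsTotallyAcyclicInjComplex

variable {I : ℤ → ModuleCat.{u} R} {d : ∀ n : ℤ, I n →ₗ[R] I (n + 1)}

lemma d_mem_ker (h : IsTotallyAcyclicInjComplex R 𝒯 I d) (n : ℤ) (x : I n) :
    d n x ∈ LinearMap.ker (d (n + 1)) :=
  (h.2.1 n).apply_apply_eq_zero x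

lemma shortExactSeq_cocycles (h : IsTotallyAcyclicInjComplex R 𝒯 I d) (n : ℤ) :
    ShortExactSeq R (ModuleCat.of R (LinearMap.ker (d n))) (I n)
      (ModuleCat.of R (LinearMap.ker (d (n + 1)))) (LinearMap.ker (d n)).subtype
      ((d n).codRestrict _ (h.d_mem_ker n)) := by
  refine ⟨Subtype.val_injective, ?_, ?_⟩
  · rintro ⟨y, hy⟩
    obtain ⟨x, rfl⟩ := (h.2.1 n y).1 hy
    exact ⟨x, rfl⟩
  · rw [LinearMap.exact_iff, LinearMap.ker_codRestrict, Submodule.range_subtype]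

lemma extAcyclic_cocycles (h : IsTotallyAcyclicInjComplex R 𝒯 I d) (n : ℤ) :
    ExtAcyclic 𝒯 (ModuleCat.of R (LinearMap.ker (d n))) := by
  intro W hW k
  have hI : ∀ n, ExtAcyclic 𝒯 (I n) := fun n => by
    have := h.1 n
    exact extAcyclic_of_injective 𝒯 (I n)
  induction k generalizing n with
  | zero =>
    refine (h.shortExactSeq_cocycles n).subsingleton_ext_one_of_lift (hI n W hW 0) fun φ => ?_
    obtain ⟨ψ, hψ⟩ := (h.2.2 W hW n ((LinearMap.ker (d (n + 1))).subtype.comp φ)).1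
      (LinearMap.ext fun w => (φ w).2)
    exact ⟨ψ, LinearMap.ext fun w => Subtype.ext (LinearMap.congr_fun hψ w)⟩
  | succ k ih =>
    exact (h.shortExactSeq_cocycles n).subsingleton_ext_left (hI n W hW (k + 1)) (ih (n + 1))

lemma leftResolvable_cocycles (h : IsTotallyAcyclicInjComplex R 𝒯 I d) (n : ℤ) :
    LeftResolvable 𝒯 (ModuleCat.of R (LinearMap.ker (d n))) := by
  refine ⟨fun Y => ∃ n, Y = ModuleCat.of R (LinearMap.ker (d n)), ⟨n, rfl⟩, ?_⟩
  rintro _ ⟨m, rfl⟩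
  refine ⟨h.extAcyclic_cocycles m, ?_⟩
  obtain ⟨n, rfl⟩ : ∃ n, m = n + 1 := ⟨m - 1, (sub_add_cancel m 1).symm⟩
  refine ⟨I n, _, h.1 n, (h.shortExactSeq_cocycles n).2.1, n, ?_⟩
  rw [LinearMap.ker_codRestrict]

end IsTotallyAcyclicInjComplex

lemma GorensteinRelInjective.leftResolvable {M : ModuleCat.{u} R}
    (h : GorensteinRelInjective R 𝒯 M) : LeftResolvable 𝒯 M := by
  obtain ⟨I, d, π, hd, hπ, hex⟩ := h
  have : Module.Injective R (I 0) := hd.1 0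
  have hker : LinearMap.ker π = LinearMap.ker (d 0) := by
    rw [LinearMap.exact_iff.1 hex]
    exact (LinearMap.exact_iff.1 (hd.2.1 (-1))).symm
  have hK : LeftResolvable 𝒯 (ModuleCat.of R (LinearMap.ker π)) := by
    rw [hker]
    exact hd.leftResolvable_cocycles 0
  exact .of_cover ((shortExactSeq_ker hπ).extAcyclic_right hK.extAcyclic
    (extAcyclic_of_injective 𝒯 (I 0))) π hπ hK

lemma gorensteinRelInjective_iff_leftResolvable {M : ModuleCat.{u} R} :
    GorensteinRelInjective R 𝒯 M ↔ LeftResolvable 𝒯 M :=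
  ⟨GorensteinRelInjective.leftResolvable, LeftResolvable.gorensteinRelInjective⟩

lemma gorensteinRelInjective_of_injective (I : ModuleCat.{u} R) [hI : Module.Injective R I] :
    GorensteinRelInjective R 𝒯 I := by
  let δ : I × I →ₗ[R] I × I := (LinearMap.inr R I I).comp (LinearMap.fst R I I)
  have hδ : ∀ x, δ x = (0, x.1) := fun _ => rfl
  refine ⟨fun _ => ModuleCat.of R (I × I), fun _ => δ, LinearMap.fst R I I,
    ⟨fun _ => injective_prod I I, fun _ x => ⟨fun hx => ?_, ?_⟩,
    fun W _ _ φ => ⟨fun hφ => ?_, ?_⟩⟩, Prod.fst_surjective, fun x => ⟨fun hx => ?_, ?_⟩⟩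
  · exact ⟨(x.2, 0), Prod.ext (congrArg Prod.snd hx).symm rfl⟩
  · rintro ⟨x, rfl⟩
    rfl
  · refine ⟨(LinearMap.inl R I I).comp ((LinearMap.snd R I I).comp φ), LinearMap.ext fun w => ?_⟩
    exact Prod.ext (congrArg Prod.snd (LinearMap.congr_fun hφ w)).symm rfl
  · rintro ⟨φ, rfl⟩
    rfl
  · exact ⟨(x.2, 0), Prod.ext (Eq.symm hx) rfl⟩
  · rintro ⟨x, rfl⟩
    rfl

lemma extVanish_succ_of_injective (n : ℕ) (N I : ModuleCat.{u} R) [Module.Injective R I] :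
    ExtVanish R (n + 1) N I := by
  have : Injective I := Module.injective_object_of_injective_module R I
  let P := projectiveResolution N
  refine @ModuleCat.subsingleton_of_isZero _ _ _ ?_
  refine Limits.IsZero.of_iso ?_ (P.isoExt (R := ℤ) (n + 1) I)
  rw [← HomologicalComplex.exactAt_iff_isZero_homology,
    HomologicalComplex.exactAt_iff' _ n (n + 1) (n + 2) (by simp) (by simp),
    ShortComplex.moduleCat_exact_iff]
  intro (φ : P.complex.X (n + 1) ⟶ I) hφ
  have hφ' : P.complex.d (n + 2) (n + 1) ≫ φ = 0 := hφ
  have hex := (HomologicalComplex.exactAt_iff' _ (n + 2) (n + 1) n (by simp) (by simp)).1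
    (P.complex_exactAt_succ n)
  exact ⟨hex.descToInjective φ hφ', hex.comp_descToInjective φ hφ'⟩

lemma weakInjective_of_injective (I : ModuleCat.{u} R) (hI : Module.Injective R I) :
    WeakInjective R I :=
  fun N _ => extVanish_succ_of_injective 0 N I

end Resolving

/-- The class of Gorenstein weak injective modules is injectively resolving: it contains
all injective modules, and given a short exact sequence `0 → L → M → N → 0` with `L`
Gorenstein weak injective, `M` is Gorenstein weak injective iff `N` is. -/
theorem gorensteinWeakInjective_injectively_resolving :
    (∀ I : ModuleCat.{u} R, Module.Injective R I → GorensteinWeakInjective R I) ∧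
    (∀ (L M N : ModuleCat.{u} R) (f : L →ₗ[R] M) (g : M →ₗ[R] N),
      ShortExactSeq R L M N f g → GorensteinWeakInjective R L →
      (GorensteinWeakInjective R M ↔ GorensteinWeakInjective R N)) := by
  refine ⟨fun I _ => gorensteinRelInjective_of_injective I, fun L M N f g h hL => ?_⟩
  have hL' := hL.leftResolvable
  rw [GorensteinWeakInjective, GorensteinWeakInjective, gorensteinRelInjective_iff_leftResolvable,
    gorensteinRelInjective_iff_leftResolvable]
  exact ⟨.cokernel weakInjective_of_injective h hL', .extension weakInjective_of_injective h hL'⟩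
end
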